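/- arXiv:2603.20060 — 2 statements merged into one kernel-verified Lean document; each statement's English description precedes it below -/
import Mathlib

section
/- For all integers n ≥ 2, d ≥ 2, let t = n^(3d+10) and let m > t. Under UNFAIR with n bins and d choices, let Y_i be the event that the bin that is ranked i-th least-loaded at time t remains ranked i-th least-loaded at every time s with t < s ≤ m, and let Y be the intersection of the events Y_1, …, Y_n. Then Pr(Y) ≥ (1 − O(n^(−d−1)))·(1 − O(n²·e^(−(d−1)n))) = 1 − O(n^(−d−1)). -/
namespace Unfair

/-- Loads of the `n` bins, starting from `init`, after the balls recorded in `l`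
have been placed (each entry of `l` is the bin that received a ball). -/
def loadsOf (n : ℕ) (init : Fin n → ℕ) (l : List (Fin n)) : Fin n → ℕ :=
  fun b => init b + l.count b

/-- One step of UNFAIR: draw `d` options uniformly from `{1,…,n}^d` (with replacement)
and return the most-loaded option bin, ties broken uniformly at random. -/
noncomputable def stepBin (n d : ℕ) (hn : 0 < n) (hd : 0 < d) (L : Fin n → ℕ) :
    PMF (Fin n) :=
  haveI : NeZero n := ⟨hn.ne'⟩
  haveI : NeZero d := ⟨hd.ne'⟩
  (PMF.uniformOfFintype (Fin d → Fin n)).bind fun opts =>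
    PMF.uniformOfFinset
      ((Finset.univ.image opts).filter fun b => ∀ k, L (opts k) ≤ L b)
      (by
        classical
        obtain ⟨b, hb, hmax⟩ := Finset.exists_max_image (Finset.univ.image opts) L
          (Finset.univ_nonempty.image opts)
        exact ⟨b, Finset.mem_filter.2 ⟨hb, fun k =>
          hmax _ (Finset.mem_image_of_mem _ (Finset.mem_univ k))⟩⟩)

/-- The permutations of `Fin n` that sort the loads `L`: `σ` maps rank (0-indexed,
least-loaded first) to bin, so `L ∘ σ` is monotone. -/
noncomputable def compatPerms (n : ℕ) (L : Fin n → ℕ) : Finset (Equiv.Perm (Fin n)) :=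
  @Finset.filter _ (fun σ => Monotone fun i => L (σ i)) (Classical.decPred _) Finset.univ

/-- A uniformly random ranking of the bins by load, ties broken uniformly at random:
a uniform element of the sorting permutations of `L`. -/
noncomputable def rankPMF (n : ℕ) (L : Fin n → ℕ) : PMF (Equiv.Perm (Fin n)) :=
  PMF.uniformOfFinset (compatPerms n L)
    ⟨Tuple.sort L, by
      simp only [compatPerms, Finset.mem_filter, Finset.mem_univ, true_and]
      exact Tuple.monotone_sort L⟩

/-- The UNFAIR process, run for `m` steps from initial loads `init`.  The outcome is the
history: at each step we record the bin that received the ball together with a uniformly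
random load-ranking of the bins (ties broken uniformly at random) just after that step. -/
noncomputable def proc (n d : ℕ) (hn : 0 < n) (hd : 0 < d) (init : Fin n → ℕ) :
    ℕ → PMF (List (Fin n × Equiv.Perm (Fin n)))
  | 0 => PMF.pure []
  | (m + 1) => (proc n d hn hd init m).bind fun hist =>
      (stepBin n d hn hd (loadsOf n init (hist.map Prod.fst))).bind fun b =>
        (rankPMF n (loadsOf n init (hist.map Prod.fst ++ [b]))).bind fun σ =>
          PMF.pure (hist ++ [(b, σ)])

/-- The loads at time `t` along a history `h`. -/
def trajLoads (n : ℕ) (init : Fin n → ℕ) (h : List (Fin n × Equiv.Perm (Fin n)))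
    (t : ℕ) : Fin n → ℕ :=
  loadsOf n init ((h.map Prod.fst).take t)

/-- The ranking permutation at time `s ≥ 1` along a history `h`
(maps rank, 0-indexed least-loaded first, to bin). -/
def trajRank (n : ℕ) (h : List (Fin n × Equiv.Perm (Fin n))) (s : ℕ) :
    Equiv.Perm (Fin n) :=
  (h.map Prod.snd).getD (s - 1) 1

/-- The load of the `i`-th least-loaded bin (0-indexed) for loads `L`. -/
noncomputable def sortedLoad (n : ℕ) (L : Fin n → ℕ) (i : Fin n) : ℕ :=
  L (Tuple.sort L i)

/-- Expectation of `f` under the distribution `p`. -/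
noncomputable def pexp {α : Type*} (p : PMF α) (f : α → ℝ) : ℝ :=
  ∑' a, (p a).toReal * f a

/-- Probability of the event `S` under the distribution `p`, as a real number. -/
noncomputable def prob {α : Type*} (p : PMF α) (S : Set α) : ℝ :=
  (p.toOuterMeasure S).toReal

end Unfair

namespace Unfair

/-- The conditional law of the chosen bin given the option set. -/
noncomputable def condProb (n d : ℕ) (L : Fin n → ℕ) (opts : Fin d → Fin n) (b : Fin n) : ENNReal :=
  if b ∈ ((Finset.univ.image opts).filter fun b => ∀ k, L (opts k) ≤ L b) then
    (((Finset.univ.image opts).filter fun b => ∀ k, L (opts k) ≤ L b).card : ENNReal)⁻¹ else 0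

lemma stepBin_apply (n d : ℕ) (hn : 0 < n) (hd : 0 < d) (L : Fin n → ℕ) (b : Fin n) :
    stepBin n d hn hd L b = ((n : ENNReal) ^ d)⁻¹ * ∑ opts, condProb n d L opts b := by
  have : NeZero n := ⟨hn.ne'⟩
  have : NeZero d := ⟨hd.ne'⟩
  unfold stepBin
  rw [PMF.bind_apply, tsum_fintype, Finset.mul_sum]
  refine Finset.sum_congr rfl fun opts _ => ?_
  rw [PMF.uniformOfFintype_apply, PMF.uniformOfFinset_apply]
  simp [condProb]

lemma condProb_le_one (n d : ℕ) (L : Fin n → ℕ) (opts : Fin d → Fin n) (b : Fin n) :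
    condProb n d L opts b ≤ 1 := by
  unfold condProb
  split_ifs with h
  · rw [ENNReal.inv_le_one]
    exact_mod_cast Finset.card_pos.2 ⟨b, h⟩
  · simp

lemma condProb_eq_one (n d : ℕ) (L : Fin n → ℕ) (opts : Fin d → Fin n) (b : Fin n)
    (hb : ∃ k, opts k = b) (h : ∀ k, opts k ≠ b → L (opts k) < L b) :
    condProb n d L opts b = 1 := by
  have : ((Finset.univ.image opts).filter fun b => ∀ k, L (opts k) ≤ L b) = {b} := by
    ext c
    simp only [Finset.mem_filter, Finset.mem_image, Finset.mem_univ, true_and,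
      Finset.mem_singleton]
    constructor
    · rintro ⟨⟨k, rfl⟩, h2⟩
      by_contra hne
      obtain ⟨k', rfl⟩ := hb
      exact absurd (h k hne) (not_lt.2 (h2 k'))
    · rintro rfl
      refine ⟨hb, fun k => ?_⟩
      by_cases hk : opts k = c
      · rw [hk]
      · exact (h k hk).le
  unfold condProb
  rw [this]
  simp

lemma stepBin_ge (n d : ℕ) (hn : 0 < n) (hd : 0 < d) (L : Fin n → ℕ) (b : Fin n) :
    ((n : ENNReal) ^ d)⁻¹ ≤ stepBin n d hn hd L b := by
  rw [stepBin_apply]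
  calc ((n : ENNReal) ^ d)⁻¹ = ((n : ENNReal) ^ d)⁻¹ * condProb n d L (fun _ => b) b := by
        rw [condProb_eq_one n d L _ b ⟨⟨0, hd⟩, rfl⟩ (by simp), mul_one]
    _ ≤ _ := by
        gcongr
        exact Finset.single_le_sum (f := fun opts => condProb n d L opts b)
          (fun _ _ => zero_le) (Finset.mem_univ _)

lemma stepBin_gap (n d : ℕ) (hn : 0 < n) (hd0 : 0 < d) (hd : 2 ≤ d) (L : Fin n → ℕ) (i j : Fin n)
    (hij : L j < L i) :
    stepBin n d hn hd0 L j + ((n : ENNReal) ^ d)⁻¹ ≤ stepBin n d hn hd0 L i := by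
  classical
  have hne : i ≠ j := by rintro rfl; exact lt_irrefl _ hij
  rw [stepBin_apply, stepBin_apply]
  let e : (Fin d → Fin n) ≃ (Fin d → Fin n) := Equiv.arrowCongr (Equiv.refl _) (Equiv.swap i j)
  have he : ∀ o k, e o k = Equiv.swap i j (o k) := fun o k => rfl
  rw [← Equiv.sum_comp e (fun opts => condProb n d L opts i)]
  let o₀ : Fin d → Fin n := fun k => if k = ⟨0, by omega⟩ then i else j
  have key : ∀ o, condProb n d L o j + (if o = o₀ then 1 else 0) ≤ condProb n d L (e o) i := by
    intro o
    have hval : ∀ k, (∃ k', o k' = j) → L (o k) ≤ L j ∨ o k = i → e o k ≠ i → L (e o k) < L i := by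
      intro k _ h1 h2
      rw [he] at h2 ⊢
      by_cases hi : o k = i
      · rw [hi, Equiv.swap_apply_left]; exact hij
      · by_cases hj : o k = j
        · rw [hj, Equiv.swap_apply_right] at h2; exact absurd rfl h2
        · rw [Equiv.swap_apply_of_ne_of_ne hi hj]
          rcases h1 with h1 | h1
          · omega
          · exact absurd h1 hi
    by_cases ho : o = o₀
    · have h1 : condProb n d L o j = 0 := by
        unfold condProb
        rw [if_neg]
        intro h
        have := (Finset.mem_filter.1 h).2 ⟨0, by omega⟩
        rw [ho] at this
        simp [o₀] at this
        omega
      rw [h1, if_pos ho, zero_add, condProb_eq_one]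
      · refine ⟨⟨1, by omega⟩, ?_⟩
        rw [he, ho]
        simp [o₀]
      · intro k
        refine hval k ⟨⟨1, by omega⟩, by rw [ho]; simp [o₀]⟩ ?_
        rw [ho]
        by_cases hk : k = ⟨0, by omega⟩ <;> simp [o₀, hk]
    · rw [if_neg ho, add_zero]
      by_cases hz : condProb n d L o j = 0
      · rw [hz]; exact zero_le
      · have hmem : j ∈ ((Finset.univ.image o).filter fun b => ∀ k, L (o k) ≤ L b) := by
          by_contra hc
          exact hz (by unfold condProb; rw [if_neg hc])
        simp only [Finset.mem_filter, Finset.mem_image, Finset.mem_univ, true_and] at hmem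
        obtain ⟨⟨k', hk'⟩, hle⟩ := hmem
        rw [condProb_eq_one n d L (e o) i]
        · exact condProb_le_one ..
        · exact ⟨k', by rw [he, hk', Equiv.swap_apply_right]⟩
        · exact fun k => hval k ⟨k', hk'⟩ (Or.inl (hle k))
  calc _ = ((n : ENNReal) ^ d)⁻¹ * ∑ o, (condProb n d L o j + (if o = o₀ then 1 else 0)) := by
        rw [Finset.sum_add_distrib, mul_add]
        simp
    _ ≤ _ := by
        gcongr with o
        exact key o

/-- The absolute load difference. -/
def gap {n : ℕ} (L : Fin n → ℕ) (i j : Fin n) : ℕ := (L i - L j) + (L j - L i)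

lemma gap_comm {n : ℕ} (L : Fin n → ℕ) (i j : Fin n) : gap L i j = gap L j i := by
  unfold gap; omega

/-- loads after one more ball in `b` -/
def addBall {n : ℕ} (L : Fin n → ℕ) (b : Fin n) : Fin n → ℕ :=
  fun c => L c + if b = c then 1 else 0

lemma step_real_aux (n d : ℕ) (hn : 0 < n) (hd0 : 0 < d) (hd : 2 ≤ d) (L : Fin n → ℕ) (i j : Fin n)
    (hne : i ≠ j) (hle : L j ≤ L i) (δ r : ℝ) (hδ : δ = ((n : ℝ) ^ d)⁻¹) (hr : r = 1 / (1 + δ / 2)) :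
    ∑ b, (stepBin n d hn hd0 L b).toReal * r ^ gap (addBall L b) i j
      ≤ (1 - δ ^ 2 / 8) * r ^ gap L i j := by
  set p := stepBin n d hn hd0 L with hp
  have hn1 : (1 : ℝ) ≤ (n : ℝ) ^ d := one_le_pow₀ (by exact_mod_cast hn)
  have hδ0 : 0 < δ := by rw [hδ]; positivity
  have hδ1 : δ ≤ 1 := by rw [hδ]; exact inv_le_one_of_one_le₀ hn1
  have hr0 : 0 < r := by rw [hr]; positivity
  have hrr : r * (1 + δ / 2) = 1 := by rw [hr]; field_simp
  have hsum : ∑ b, (p b).toReal = 1 := by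
    rw [← ENNReal.toReal_sum (fun a _ => p.apply_ne_top a), ← tsum_fintype (L := .unconditional _), p.tsum_coe]
    simp
  have hdE : (((n : ENNReal) ^ d)⁻¹).toReal = δ := by rw [hδ]; simp
  have hP0 : ∀ b, 0 ≤ (p b).toReal := fun b => ENNReal.toReal_nonneg
  have hP1 : ∀ b, (p b).toReal ≤ 1 := fun b =>
    ENNReal.toReal_le_of_le_ofReal zero_le_one (by simpa using p.coe_le_one b)
  have hPge : ∀ b, δ ≤ (p b).toReal := fun b => by
    rw [← hdE]
    exact ENNReal.toReal_mono (p.apply_ne_top b) (stepBin_ge n d hn _ L b)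
  have hexp : ∑ b, (p b).toReal * r ^ gap (addBall L b) i j
      = r ^ gap L i j + (p i).toReal * (r ^ gap (addBall L i) i j - r ^ gap L i j)
        + (p j).toReal * (r ^ gap (addBall L j) i j - r ^ gap L i j) := by
    have h1 : ∀ b, (p b).toReal * r ^ gap (addBall L b) i j = (p b).toReal * r ^ gap L i j
        + (if b = i then (p i).toReal * (r ^ gap (addBall L i) i j - r ^ gap L i j) else 0)
        + (if b = j then (p j).toReal * (r ^ gap (addBall L j) i j - r ^ gap L i j) else 0) := by
      intro b
      by_cases hi : b = i
      · subst hi; simp only [if_true, if_neg hne]; ring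
      · by_cases hj : b = j
        · subst hj; simp only [if_true, if_neg hi]; ring
        · have : gap (addBall L b) i j = gap L i j := by simp [gap, addBall, hi, hj]
          simp [hi, hj, this]
    rw [Finset.sum_congr rfl fun b _ => h1 b, Finset.sum_add_distrib, Finset.sum_add_distrib,
      ← Finset.sum_mul, hsum]
    simp
  rw [hexp]
  have hji : j ≠ i := hne.symm
  rcases hle.eq_or_lt with h | h
  · have g0 : gap L i j = 0 := by simp [gap, h]
    have g1 : gap (addBall L i) i j = 1 := by simp [gap, addBall, h, hne]
    have g2 : gap (addBall L j) i j = 1 := by simp [gap, addBall, h, hji]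
    rw [g0, g1, g2]
    have h1 := hPge i
    have h2 := hPge j
    have h3 : δ / 4 ≤ 1 - r := by nlinarith
    simp only [pow_zero, pow_one, mul_one]
    nlinarith [mul_le_mul h1 h3 (by positivity) (hP0 i), mul_nonneg (hP0 j) (by linarith : 0 ≤ 1 - r)]
  · obtain ⟨k, hk⟩ : ∃ k, L i = L j + k + 1 := ⟨L i - L j - 1, by omega⟩
    have g0 : gap L i j = k + 1 := by simp only [gap]; omega
    have g1 : gap (addBall L i) i j = k + 2 := by simp [gap, addBall, hne]; omega
    have g2 : gap (addBall L j) i j = k := by simp [gap, addBall, hji]; omega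
    rw [g0, g1, g2]
    have hgap : (p j).toReal + δ ≤ (p i).toReal := by
      rw [← hdE, ← ENNReal.toReal_add (p.apply_ne_top j) (by simp; omega)]
      exact ENNReal.toReal_mono (p.apply_ne_top i) (stepBin_gap n d hn hd0 hd L i j h)
    have h3 : δ / 4 ≤ 1 - r := by nlinarith
    set u := (p i).toReal
    set v := (p j).toReal
    have hk0 : 0 < r ^ k := by positivity
    have hv := hP1 j
    -- r + u (r^2 - r) + v (1 - r) ≤ (1 - δ^2/8) r
    have h4 : 1 - r = r * (δ / 2) := by linarith
    have main : r + u * (r ^ 2 - r) + v * (1 - r) ≤ (1 - δ ^ 2 / 8) * r := by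
      have e1 : r + u * (r ^ 2 - r) + v * (1 - r)
          = r * (1 - (1 - r) * (u - v * (1 + δ / 2))) := by
        have : v * (1 - r) = r * ((1 - r) * v * (1 + δ / 2)) := by
          linear_combination (-(v * (1 - r))) * hrr
        rw [this]; ring
      rw [e1, mul_comm]
      have h5 : δ / 2 ≤ u - v * (1 + δ / 2) := by nlinarith
      have h6 := mul_le_mul h3 h5 (by positivity) (by linarith)
      gcongr
      nlinarith
    calc _ = r ^ k * (r + u * (r ^ 2 - r) + v * (1 - r)) := by ring
      _ ≤ r ^ k * ((1 - δ ^ 2 / 8) * r) := by gcongr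
      _ = _ := by ring

lemma step_real (n d : ℕ) (hn : 0 < n) (hd0 : 0 < d) (hd : 2 ≤ d) (L : Fin n → ℕ) (i j : Fin n)
    (hne : i ≠ j) (δ r : ℝ) (hδ : δ = ((n : ℝ) ^ d)⁻¹) (hr : r = 1 / (1 + δ / 2)) :
    ∑ b, (stepBin n d hn hd0 L b).toReal * r ^ gap (addBall L b) i j
      ≤ (1 - δ ^ 2 / 8) * r ^ gap L i j := by
  rcases le_total (L j) (L i) with h | h
  · exact step_real_aux n d hn hd0 hd L i j hne h δ r hδ hr
  · have := step_real_aux n d hn hd0 hd L j i hne.symm h δ r hδ hr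
    simp only [gap_comm _ j i] at this
    exact this

lemma tsum_bind {α β : Type*} (p : PMF α) (f : α → PMF β) (g : β → ENNReal) :
    ∑' b, (p.bind f) b * g b = ∑' a, p a * ∑' b, f a b * g b := by
  simp only [PMF.bind_apply, ← ENNReal.tsum_mul_right, ← ENNReal.tsum_mul_left]
  rw [ENNReal.tsum_comm]
  simp only [mul_assoc]

lemma tsum_pure {α : Type*} (a : α) (g : α → ENNReal) :
    ∑' b, (PMF.pure a) b * g b = g a := by
  rw [tsum_eq_single a]
  · simp
  · intro b hb; simp [hb]

lemma tsum_const {α : Type*} (p : PMF α) (c : ENNReal) :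
    ∑' b, p b * c = c := by
  rw [ENNReal.tsum_mul_right, p.tsum_coe, one_mul]

lemma loadsOf_append (n : ℕ) (init : Fin n → ℕ) (l : List (Fin n)) (b : Fin n) :
    loadsOf n init (l ++ [b]) = addBall (loadsOf n init l) b := by
  funext c
  simp [loadsOf, addBall, List.count_append, List.count_singleton, add_assoc]

lemma exp_bound (n d : ℕ) (hn : 0 < n) (hd0 : 0 < d) (hd : 2 ≤ d) (init : Fin n → ℕ) (i j : Fin n)
    (hne : i ≠ j) (δ r : ℝ) (hδ : δ = ((n : ℝ) ^ d)⁻¹) (hr : r = 1 / (1 + δ / 2)) (m : ℕ) :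
    ∑' h, proc n d hn hd0 init m h *
        ENNReal.ofReal (r ^ gap (loadsOf n init (h.map Prod.fst)) i j)
      ≤ ENNReal.ofReal ((1 - δ ^ 2 / 8) ^ m) := by
  have hn1 : (1 : ℝ) ≤ (n : ℝ) ^ d := one_le_pow₀ (by exact_mod_cast hn)
  have hδ0 : 0 < δ := by rw [hδ]; positivity
  have hδ1 : δ ≤ 1 := by rw [hδ]; exact inv_le_one_of_one_le₀ hn1
  have hr0 : 0 < r := by rw [hr]; positivity
  have hr1 : r ≤ 1 := by rw [hr, div_le_one (by positivity)]; linarith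
  have hρ : 0 ≤ 1 - δ ^ 2 / 8 := by nlinarith
  induction m with
  | zero =>
    rw [proc, tsum_pure, pow_zero]
    exact ENNReal.ofReal_le_ofReal (pow_le_one₀ hr0.le hr1)
  | succ m ih =>
    rw [proc, tsum_bind]
    have hstep : ∀ hist : List (Fin n × Equiv.Perm (Fin n)),
        (∑' h, ((stepBin n d hn hd0 (loadsOf n init (hist.map Prod.fst))).bind fun b =>
          (rankPMF n (loadsOf n init (hist.map Prod.fst ++ [b]))).bind fun σ =>
          PMF.pure (hist ++ [(b, σ)])) h *
          ENNReal.ofReal (r ^ gap (loadsOf n init (h.map Prod.fst)) i j))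
        ≤ ENNReal.ofReal (1 - δ ^ 2 / 8) *
          ENNReal.ofReal (r ^ gap (loadsOf n init (hist.map Prod.fst)) i j) := by
      intro hist
      simp only [tsum_bind, tsum_pure, List.map_append, List.map_cons, List.map_nil, tsum_const,
        loadsOf_append]
      rw [← ENNReal.ofReal_mul hρ, tsum_fintype]
      refine le_trans (le_of_eq ?_) (ENNReal.ofReal_le_ofReal
        (step_real n d hn hd0 hd (loadsOf n init (hist.map Prod.fst)) i j hne δ r hδ hr))
      rw [ENNReal.ofReal_sum_of_nonneg (fun _ _ => by positivity)]
      refine Finset.sum_congr rfl fun b _ => ?_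
      rw [ENNReal.ofReal_mul ENNReal.toReal_nonneg, ENNReal.ofReal_toReal (PMF.apply_ne_top _ b)]
    calc _ ≤ ∑' hist, proc n d hn hd0 init m hist * (ENNReal.ofReal (1 - δ ^ 2 / 8) *
          ENNReal.ofReal (r ^ gap (loadsOf n init (hist.map Prod.fst)) i j)) := by
          refine ENNReal.tsum_le_tsum fun hist => ?_
          gcongr
          exact hstep hist
      _ = ENNReal.ofReal (1 - δ ^ 2 / 8) * ∑' hist, proc n d hn hd0 init m hist *
          ENNReal.ofReal (r ^ gap (loadsOf n init (hist.map Prod.fst)) i j) := by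
          rw [← ENNReal.tsum_mul_left]
          refine tsum_congr fun hist => ?_
          ring
      _ ≤ _ := by
          rw [pow_succ' (1 - δ ^ 2 / 8) m, ENNReal.ofReal_mul hρ]
          gcongr

lemma tie_bound (n d : ℕ) (hn : 0 < n) (hd0 : 0 < d) (hd : 2 ≤ d) (init : Fin n → ℕ) (i j : Fin n)
    (hne : i ≠ j) (s : ℕ) :
    (proc n d hn hd0 init s).toOuterMeasure
      {h | loadsOf n init (h.map Prod.fst) i = loadsOf n init (h.map Prod.fst) j}
      ≤ ENNReal.ofReal ((1 - (((n : ℝ) ^ d)⁻¹) ^ 2 / 8) ^ s) := by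
  refine le_trans ?_ (exp_bound n d hn hd0 hd init i j hne _ _ rfl rfl s)
  rw [PMF.toOuterMeasure_apply]
  refine ENNReal.tsum_le_tsum fun h => ?_
  by_cases hh : loadsOf n init (h.map Prod.fst) i = loadsOf n init (h.map Prod.fst) j
  · rw [Set.indicator_of_mem (by exact hh)]
    simp [gap, hh]
  · rw [Set.indicator_of_notMem (by exact hh)]
    exact zero_le

lemma proc_support (n d : ℕ) (hn : 0 < n) (hd : 0 < d) (init : Fin n → ℕ) (m : ℕ) :
    ∀ h ∈ (proc n d hn hd init m).support, h.length = m ∧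
      ∀ s, 1 ≤ s → s ≤ m → Monotone fun i => trajLoads n init h s (trajRank n h s i) := by
  induction m with
  | zero =>
    intro h hh
    simp only [proc, PMF.support_pure, Set.mem_singleton_iff] at hh
    subst hh
    refine ⟨rfl, fun s h1 h2 => by omega⟩
  | succ m ih =>
    intro h hh
    rw [proc, PMF.mem_support_bind_iff] at hh
    obtain ⟨hist, hhist, hh⟩ := hh
    rw [PMF.mem_support_bind_iff] at hh
    obtain ⟨b, _, hh⟩ := hh
    rw [PMF.mem_support_bind_iff] at hh
    obtain ⟨σ, hσ, hh⟩ := hh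
    simp only [PMF.support_pure, Set.mem_singleton_iff] at hh
    subst hh
    obtain ⟨hlen, hmono⟩ := ih hist hhist
    refine ⟨by simp [hlen], fun s h1 h2 => ?_⟩
    rcases Nat.lt_or_ge m s with hs | hs
    · obtain rfl : s = m + 1 := by omega
      have e1 : trajLoads n init (hist ++ [(b, σ)]) (m + 1)
          = loadsOf n init (hist.map Prod.fst ++ [b]) := by
        unfold trajLoads
        rw [List.take_of_length_le (by simp [hlen])]
        simp
      have e2 : trajRank n (hist ++ [(b, σ)]) (m + 1) = σ := by
        simp [trajRank, ← hlen]
      rw [e1, e2]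
      have hσ' := (PMF.mem_support_uniformOfFinset_iff _ _).1 hσ
      simpa [compatPerms] using hσ'
    · have e1 : trajLoads n init (hist ++ [(b, σ)]) s = trajLoads n init hist s := by
        unfold trajLoads
        rw [List.map_append, List.take_append_of_le_length (by simp [hlen, hs])]
      have e2 : trajRank n (hist ++ [(b, σ)]) s = trajRank n hist s := by
        unfold trajRank
        rw [List.map_append, List.getD_append _ _ _ _ (by simp; omega)]
      rw [e1, e2]
      exact hmono s h1 hs

lemma proc_map_take (n d : ℕ) (hn : 0 < n) (hd : 0 < d) (init : Fin n → ℕ) (s m : ℕ)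
    (hsm : s ≤ m) :
    (proc n d hn hd init m).map (List.take s) = proc n d hn hd init s := by
  induction m, hsm using Nat.le_induction with
  | base =>
    conv_rhs => rw [← PMF.map_id (proc n d hn hd init s)]
    refine PMF.ext fun x => ?_
    simp only [PMF.map_apply]
    refine tsum_congr fun h => ?_
    by_cases hh : h ∈ (proc n d hn hd init s).support
    · rw [List.take_of_length_le (proc_support n d hn hd init s h hh).1.le]
      rfl
    · rw [PMF.mem_support_iff, not_not] at hh
      simp [hh]
  | succ m hm ih =>
    rw [← ih]
    refine PMF.ext fun x => ?_
    rw [proc, PMF.map_bind, PMF.map, PMF.bind_apply, PMF.bind_apply]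
    refine tsum_congr fun h => ?_
    by_cases hh : h ∈ (proc n d hn hd init m).support
    · have hlen := (proc_support n d hn hd init m h hh).1
      simp only [PMF.map_bind, PMF.pure_map, List.take_append_of_le_length (hlen ▸ hm),
        PMF.bind_const, Function.comp]
    · rw [PMF.mem_support_iff, not_not] at hh
      simp [hh]

lemma rank_unique (n : ℕ) (L : Fin n → ℕ) (hL : Function.Injective L) (σ τ : Equiv.Perm (Fin n))
    (hσ : Monotone fun i => L (σ i)) (hτ : Monotone fun i => L (τ i)) : σ = τ := by
  have h := Tuple.unique_monotone (f := L) (σ := σ) (τ := τ) hσ hτ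
  ext i
  exact congrArg _ (hL (congrFun h i))

lemma rank_const (n : ℕ) (init : Fin n → ℕ) (h : List (Fin n × Equiv.Perm (Fin n))) (t m : ℕ)
    (ht : 1 ≤ t) (hlen : h.length = m)
    (hmono : ∀ s, 1 ≤ s → s ≤ m → Monotone fun i => trajLoads n init h s (trajRank n h s i))
    (hinj : ∀ s, t ≤ s → s ≤ m → Function.Injective (trajLoads n init h s)) (s : ℕ)
    (hts : t ≤ s) (hsm : s ≤ m) : trajRank n h s = trajRank n h t := by
  induction s, hts using Nat.le_induction with
  | base => rfl
  | succ s hs ih =>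
    rw [← ih (by omega)]
    have hlt : s < (h.map Prod.fst).length := by simp; omega
    have hL : trajLoads n init h (s + 1)
        = addBall (trajLoads n init h s) ((h.map Prod.fst)[s]) := by
      unfold trajLoads
      rw [← loadsOf_append, List.take_append_getElem hlt]
    refine rank_unique n _ (hinj (s + 1) (by omega) hsm) _ _ (hmono (s + 1) (by omega) hsm) ?_
    rw [hL]
    intro a b hab
    rcases hab.eq_or_lt with rfl | hab
    · exact le_rfl
    · have h1 := hmono s (by omega) (by omega) hab.le
      have h2 : trajLoads n init h s (trajRank n h s a) ≠ trajLoads n init h s (trajRank n h s b) :=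
        fun he => hab.ne ((trajRank n h s).injective (hinj s hs (by omega) he))
      simp only [addBall] at h1 ⊢
      split_ifs <;> omega

lemma fail_bound (n d : ℕ) (hn : 0 < n) (hd0 : 0 < d) (hd : 2 ≤ d) (init : Fin n → ℕ) (t m : ℕ)
    (ht : 1 ≤ t) :
    (proc n d hn hd0 init m).toOuterMeasure
      {h | ∀ i : Fin n, ∀ s : ℕ, t < s → s ≤ m → trajRank n h s i = trajRank n h t i}ᶜ
      ≤ ENNReal.ofReal ((n : ℝ) ^ 2 *
        ∑ s ∈ Finset.Icc t m, (1 - (((n : ℝ) ^ d)⁻¹) ^ 2 / 8) ^ s) := by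
  classical
  have hn1 : (1 : ℝ) ≤ (n : ℝ) ^ d := one_le_pow₀ (by exact_mod_cast hn)
  have hδ0 : 0 < ((n : ℝ) ^ d)⁻¹ := by positivity
  have hδ1 : ((n : ℝ) ^ d)⁻¹ ≤ 1 := inv_le_one_of_one_le₀ hn1
  have hρ : 0 ≤ 1 - (((n : ℝ) ^ d)⁻¹) ^ 2 / 8 := by nlinarith
  set ρ := 1 - (((n : ℝ) ^ d)⁻¹) ^ 2 / 8
  set p := proc n d hn hd0 init m with hp
  let B : ℕ × (Fin n × Fin n) → Set (List (Fin n × Equiv.Perm (Fin n))) := fun q =>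
    {h | q.2.1 ≠ q.2.2 ∧ trajLoads n init h q.1 q.2.1 = trajLoads n init h q.1 q.2.2}
  have hsub : p.toOuterMeasure
      {h | ∀ i : Fin n, ∀ s : ℕ, t < s → s ≤ m → trajRank n h s i = trajRank n h t i}ᶜ
      ≤ p.toOuterMeasure (⋃ q ∈ Finset.Icc t m ×ˢ (Finset.univ : Finset (Fin n × Fin n)), B q) := by
    apply PMF.toOuterMeasure_mono
    rintro h ⟨hbad, hsup⟩
    by_contra hc
    apply hbad
    obtain ⟨hlen, hmono⟩ := proc_support n d hn _ init m h hsup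
    intro i s h1 h2
    rw [rank_const n init h t m ht hlen hmono ?_ s h1.le h2]
    intro s' h3 h4 a b hab
    by_contra hne
    apply hc
    simp only [Set.mem_iUnion]
    exact ⟨(s', (a, b)), by simp [h3, h4], hne, hab⟩
  have hB : ∀ q ∈ Finset.Icc t m ×ˢ (Finset.univ : Finset (Fin n × Fin n)),
      p.toOuterMeasure (B q) ≤ ENNReal.ofReal (ρ ^ q.1) := by
    rintro ⟨s, i, j⟩ hq
    have hs : s ≤ m := by simp at hq; omega
    by_cases hne : i = j
    · have : B (s, i, j) = ∅ := by ext; simp [B, hne]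
      rw [this]; simp
    · refine le_trans (le_of_eq ?_) (tie_bound n d hn hd0 hd init i j hne s)
      rw [← proc_map_take n d hn hd0 init s m hs, PMF.toOuterMeasure_map_apply]
      congr 1
      ext h
      simp [B, hne, trajLoads, List.map_take]
  calc _ ≤ _ := hsub
    _ ≤ ∑ q ∈ Finset.Icc t m ×ˢ (Finset.univ : Finset (Fin n × Fin n)), p.toOuterMeasure (B q) :=
      MeasureTheory.measure_biUnion_finset_le _ _
    _ ≤ ∑ q ∈ Finset.Icc t m ×ˢ (Finset.univ : Finset (Fin n × Fin n)),
        ENNReal.ofReal (ρ ^ q.1) := Finset.sum_le_sum hB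
    _ = _ := by
      rw [← ENNReal.ofReal_sum_of_nonneg (fun _ _ => by positivity), Finset.sum_product]
      congr 1
      simp [Finset.mul_sum, sq]

lemma geom_Icc_le (ρ : ℝ) (h0 : 0 ≤ ρ) (h1 : ρ < 1) (t m : ℕ) :
    ∑ s ∈ Finset.Icc t m, ρ ^ s ≤ ρ ^ t / (1 - ρ) := by
  rw [← Finset.Ico_succ_right_eq_Icc]
  exact geom_sum_Ico_le_of_lt_one h0 h1

lemma numeric (n d : ℕ) (hn : 0 < n) (m : ℕ) :
    (n : ℝ) ^ 2 * ∑ s ∈ Finset.Icc (n ^ (3 * d + 10)) m, (1 - (((n : ℝ) ^ d)⁻¹) ^ 2 / 8) ^ s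
      ≤ 24576 / (n : ℝ) ^ (d + 1) := by
  have hN : (1 : ℝ) ≤ n := by exact_mod_cast hn
  have hn1 : (1 : ℝ) ≤ (n : ℝ) ^ d := one_le_pow₀ hN
  have hδ0 : 0 < ((n : ℝ) ^ d)⁻¹ := by positivity
  have hδ1 : ((n : ℝ) ^ d)⁻¹ ≤ 1 := inv_le_one_of_one_le₀ hn1
  set x := (((n : ℝ) ^ d)⁻¹) ^ 2 / 8 with hx
  have hx0 : 0 < x := by positivity
  have hx1 : x ≤ 1 := by nlinarith
  set y := x * (n : ℝ) ^ (3 * d + 10) with hy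
  have hyv : y = (n : ℝ) ^ (d + 10) / 8 := by
    rw [hy, hx]; field_simp; ring
  have hy0 : 0 < y := by positivity
  have h1 : (1 - x) ^ (n ^ (3 * d + 10)) ≤ 6 / y ^ 3 := by
    calc (1 - x) ^ (n ^ (3 * d + 10)) ≤ (Real.exp (-x)) ^ (n ^ (3 * d + 10)) := by
          exact pow_le_pow_left₀ (by linarith) (Real.one_sub_le_exp_neg x) _
      _ = Real.exp (-y) := by
          rw [← Real.exp_nat_mul]; congr 1; rw [hy]; push_cast; ring
      _ ≤ 6 / y ^ 3 := by
          rw [Real.exp_neg, ← one_div, div_le_div_iff₀ (Real.exp_pos y) (by positivity)]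
          have := Real.pow_div_factorial_le_exp y hy0.le 3
          norm_num [Nat.factorial] at this
          linarith
  have h2 := geom_Icc_le (1 - x) (by linarith) (by linarith) (n ^ (3 * d + 10)) m
  calc _ ≤ (n : ℝ) ^ 2 * ((1 - x) ^ (n ^ (3 * d + 10)) / (1 - (1 - x))) := by gcongr
    _ ≤ (n : ℝ) ^ 2 * ((6 / y ^ 3) / (1 - (1 - x))) := by
        gcongr; linarith
    _ = 24576 / (n : ℝ) ^ (d + 28) := by
        rw [hyv, sub_sub_cancel, hx]
        field_simp
        ring
    _ ≤ _ := by
        gcongr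
        norm_num

lemma prob_bound (n d : ℕ) (hn : 0 < n) (hd0 : 0 < d) (hd : 2 ≤ d) (m : ℕ) :
    1 - 24576 / (n : ℝ) ^ (d + 1) ≤
      prob (proc n d hn hd0 0 m)
        {h | ∀ i : Fin n, ∀ s : ℕ, n ^ (3 * d + 10) < s → s ≤ m →
          trajRank n h s i = trajRank n h (n ^ (3 * d + 10)) i} := by
  set p := proc n d hn hd0 0 m with hp
  set S := {h : List (Fin n × Equiv.Perm (Fin n)) |
    ∀ i : Fin n, ∀ s : ℕ, n ^ (3 * d + 10) < s → s ≤ m →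
          trajRank n h s i = trajRank n h (n ^ (3 * d + 10)) i} with hS
  have h1 : p.toOuterMeasure Sᶜ ≤ ENNReal.ofReal (24576 / (n : ℝ) ^ (d + 1)) :=
    (fail_bound n d hn hd0 hd 0 (n ^ (3 * d + 10)) m (Nat.one_le_pow _ _ hn)).trans
      (ENNReal.ofReal_le_ofReal (numeric n d hn m))
  have h2 : (1 : ENNReal) ≤ p.toOuterMeasure S + p.toOuterMeasure Sᶜ := by
    have : p.toOuterMeasure Set.univ = 1 := by
      rw [PMF.toOuterMeasure_apply_eq_one_iff]; exact Set.subset_univ _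
    rw [← this, ← Set.union_compl_self S]
    exact MeasureTheory.measure_union_le _ _
  have hfin : p.toOuterMeasure S ≠ ⊤ := by
    refine ne_top_of_le_ne_top ENNReal.one_ne_top ?_
    rw [PMF.toOuterMeasure_apply, ← p.tsum_coe]
    exact ENNReal.tsum_le_tsum fun h => Set.indicator_le_self _ _ _
  have h3 : (1 : ENNReal) ≤ p.toOuterMeasure S + ENNReal.ofReal (24576 / (n : ℝ) ^ (d + 1)) :=
    h2.trans (by gcongr)
  have h4 := ENNReal.toReal_mono (by simp [hfin]) h3
  rw [ENNReal.toReal_add hfin (by simp), ENNReal.toReal_ofReal (by positivity)] at h4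
  simp only [ENNReal.toReal_one] at h4
  unfold prob
  linarith

end Unfair

open Unfair in
/-- **Lemma 2 (fixation of the ranking).** For all integers `n ≥ 2`, `d ≥ 2`, let
`t = n^(3d+10)` and `m > t`.  Let `Y` be the event that for every rank `i`, the bin
ranked `i`-th least-loaded at time `t` remains ranked `i`-th least-loaded at every time
`s` with `t < s ≤ m`.  Then `Pr(Y) ≥ (1 − O(n^(−d−1)))·(1 − O(n²·e^(−(d−1)n)))
= 1 − O(n^(−d−1))`. -/
theorem unfair_ranking_fixation (d : ℕ) (hd2 : 2 ≤ d) :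
    ∃ C₁ C₂ C₃ : ℝ, 0 < C₁ ∧ 0 < C₂ ∧ 0 < C₃ ∧
      ∀ n : ℕ, ∀ hn2 : 2 ≤ n, ∀ m : ℕ, n ^ (3 * d + 10) < m →
        (1 - C₁ / (n : ℝ) ^ (d + 1)) *
            (1 - C₂ * (n : ℝ) ^ 2 * Real.exp (-((d : ℝ) - 1) * n)) ≤
          prob (proc n d (by omega) (by omega) 0 m)
            {h | ∀ i : Fin n, ∀ s : ℕ, n ^ (3 * d + 10) < s → s ≤ m →
              trajRank n h s i = trajRank n h (n ^ (3 * d + 10)) i} ∧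
        1 - C₃ / (n : ℝ) ^ (d + 1) ≤
          prob (proc n d (by omega) (by omega) 0 m)
            {h | ∀ i : Fin n, ∀ s : ℕ, n ^ (3 * d + 10) < s → s ≤ m →
              trajRank n h s i = trajRank n h (n ^ (3 * d + 10)) i} := by
  refine ⟨24576, 1, 24576, by norm_num, by norm_num, by norm_num, fun n hn2 m _ => ?_⟩
  have hmain := prob_bound n d (by omega) (by omega) hd2 m
  refine ⟨?_, hmain⟩
  refine le_trans ?_ (max_le hmain (ENNReal.toReal_nonneg))
  have hN : (2 : ℝ) ≤ n := by exact_mod_cast hn2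
  have hd : (2 : ℝ) ≤ d := by exact_mod_cast hd2
  have hb0 : 0 ≤ 1 * (n : ℝ) ^ 2 * Real.exp (-((d : ℝ) - 1) * n) := by positivity
  have hb1 : 1 * (n : ℝ) ^ 2 * Real.exp (-((d : ℝ) - 1) * n) ≤ 1 := by
    have h1 : Real.exp (-((d : ℝ) - 1) * n) ≤ Real.exp (-(n : ℝ)) := by
      apply Real.exp_le_exp.2; nlinarith
    have h2 : (n : ℝ) ^ 2 ≤ Real.exp n := by
      have h3 : (n : ℝ) ≤ Real.exp (n / 2) := by
        have h4 := Real.add_one_le_exp ((n : ℝ) / 2 - 1)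
        have h5 : Real.exp ((n : ℝ) / 2) = Real.exp (n / 2 - 1) * Real.exp 1 := by
          rw [← Real.exp_add]; ring_nf
        have h6 := Real.exp_one_gt_d9
        rw [h5]
        nlinarith
      calc (n : ℝ) ^ 2 ≤ Real.exp (n / 2) ^ 2 := by gcongr
        _ = Real.exp n := by rw [← Real.exp_nat_mul]; congr 1; push_cast; ring
    calc 1 * (n : ℝ) ^ 2 * Real.exp (-((d : ℝ) - 1) * n) ≤ 1 * Real.exp n * Real.exp (-(n : ℝ)) := by
          gcongr
      _ = 1 := by rw [one_mul, ← Real.exp_add]; simp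
  generalize 1 * (n : ℝ) ^ 2 * Real.exp (-((d : ℝ) - 1) * n) = b at hb0 hb1
  generalize 1 - 24576 / (n : ℝ) ^ (d + 1) = a
  rcases le_total 0 a with ha | ha
  · exact le_max_of_le_left (by nlinarith)
  · exact le_max_of_le_right (by nlinarith)
end

section
/- For all integers n ≥ 2, d ≥ 2, set R = n^(3d+10) and r = n^(2d+10). Run UNFAIR with n bins and d choices, and partition an initialization period into C(n,2) consecutive phases of length R, one phase φ_{i,j} for each unordered pair of distinct bins {B_i, B_j}. Let X be the event that for every pair {i,j}, the combined number of balls placed in B_i and B_j during phase φ_{i,j} is at least r. Then Pr(X) ≥ 1 − O(n²·e^(−n^(d+10))). -/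
namespace Unfair

/-- Extended-nonnegative expectation. -/
noncomputable def ex {α : Type*} (p : PMF α) (f : α → ENNReal) : ENNReal := ∑' a, p a * f a

lemma ex_bind {α β : Type*} (p : PMF α) (g : α → PMF β) (f : β → ENNReal) :
    ex (p.bind g) f = ex p (fun a => ex (g a) f) := by
  unfold ex
  simp only [PMF.bind_apply, ← ENNReal.tsum_mul_right, ← ENNReal.tsum_mul_left]
  rw [ENNReal.tsum_comm]
  simp only [mul_assoc]

lemma ex_pure {α : Type*} (a : α) (f : α → ENNReal) : ex (PMF.pure a) f = f a := by
  classical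
  unfold ex
  rw [tsum_eq_single a]
  · simp
  · intro b hb
    simp [PMF.pure_apply, hb]

lemma ex_const {α : Type*} (p : PMF α) (c : ENNReal) : ex p (fun _ => c) = c := by
  unfold ex
  rw [ENNReal.tsum_mul_right, p.tsum_coe, one_mul]

lemma ex_mono {α : Type*} (p : PMF α) {f g : α → ENNReal} (h : ∀ a, p a ≠ 0 → f a ≤ g a) :
    ex p f ≤ ex p g := by
  unfold ex
  refine ENNReal.tsum_le_tsum fun a => ?_
  by_cases ha : p a = 0
  · simp [ha]
  · gcongr
    exact h a ha

lemma ex_mul {α : Type*} (p : PMF α) (f : α → ENNReal) (c : ENNReal) :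
    ex p (fun a => f a * c) = ex p f * c := by
  unfold ex
  rw [← ENNReal.tsum_mul_right]
  simp only [mul_assoc]

lemma ex_add {α : Type*} (p : PMF α) (f g : α → ENNReal) :
    ex p (fun a => f a + g a) = ex p f + ex p g := by
  unfold ex
  rw [← ENNReal.tsum_add]
  simp only [mul_add]

lemma ex_proc_succ (n d : ℕ) (hn : 0 < n) (hd : 0 < d) (init : Fin n → ℕ) (m : ℕ)
    (f : List (Fin n × Equiv.Perm (Fin n)) → ENNReal) :
    ex (proc n d hn hd init (m + 1)) f =
      ex (proc n d hn hd init m) (fun h =>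
        ex (stepBin n d hn hd (loadsOf n init (h.map Prod.fst))) fun b =>
          ex (rankPMF n (loadsOf n init (h.map Prod.fst ++ [b]))) fun σ => f (h ++ [(b, σ)])) := by
  simp only [proc, ex_bind, ex_pure]

lemma proc_length (n d : ℕ) (hn : 0 < n) (hd : 0 < d) (init : Fin n → ℕ) (m : ℕ) :
    ∀ h, proc n d hn hd init m h ≠ 0 → h.length = m := by
  induction m with
  | zero =>
    intro h hh
    rw [← PMF.mem_support_iff] at hh
    simp [proc] at hh
    simp [hh]
  | succ m ih =>
    intro h hh
    rw [← PMF.mem_support_iff] at hh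
    simp only [proc, PMF.mem_support_bind_iff, PMF.mem_support_pure_iff] at hh
    obtain ⟨h', hh', b, -, σ, -, rfl⟩ := hh
    have := ih h' ((PMF.mem_support_iff _ _).1 hh')
    simp [this]

/-- The discount factor `e⁻¹`. -/
noncomputable def cc : ENNReal := ENNReal.ofReal (Real.exp (-1))

lemma cc_le : cc + ENNReal.ofReal (1 / 2) ≤ 1 := by
  unfold cc
  rw [← ENNReal.ofReal_add (Real.exp_pos _).le (by norm_num), ← ENNReal.ofReal_one]
  apply ENNReal.ofReal_le_ofReal
  have h2 := Real.add_one_le_exp (1 : ℝ)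
  rw [Real.exp_neg]
  have : (Real.exp 1)⁻¹ ≤ 2⁻¹ := inv_anti₀ (by norm_num) (by linarith)
  linarith

lemma cc_le_one : cc ≤ 1 := le_trans le_self_add cc_le

lemma step_bound (n d : ℕ) (hn : 0 < n) (hd : 2 ≤ d) (hd0 : 0 < d) (L : Fin n → ℕ)
    (i j : Fin n) (hij : i ≠ j) :
    ex (stepBin n d hn hd0 L) (fun b => if b = i ∨ b = j then cc else 1) ≤
      ENNReal.ofReal (Real.exp (-(2 / (n : ℝ) ^ d))) := by
  classical
  haveI : NeZero n := ⟨hn.ne'⟩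
  haveI : NeZero d := ⟨hd0.ne'⟩
  set A : Finset (Fin d → Fin n) := Fintype.piFinset fun _ => ({i, j} : Finset (Fin n)) with hA
  have hcard : A.card = 2 ^ d := by
    simp [hA, Fintype.card_piFinset, Finset.card_pair hij]
  have key : ex (stepBin n d hn hd0 L) (fun b => if b = i ∨ b = j then cc else 1) +
      ex (PMF.uniformOfFintype (Fin d → Fin n))
        (fun o => if o ∈ A then ENNReal.ofReal (1 / 2) else 0) ≤ 1 := by
    unfold stepBin
    rw [ex_bind, ← ex_add]
    refine le_trans (ex_mono _ (g := fun _ => 1) fun o _ => ?_) (ex_const _ _).le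
    split_ifs with ho
    · refine le_trans ?_ cc_le
      gcongr
      refine le_trans (ex_mono _ (g := fun _ => cc) fun b hb => ?_) (ex_const _ _).le
      rw [← PMF.mem_support_iff, PMF.support_uniformOfFinset] at hb
      simp only [Finset.coe_filter, Finset.mem_image, Finset.mem_univ, true_and,
        Set.mem_setOf_eq] at hb
      obtain ⟨⟨k, rfl⟩, -⟩ := hb
      have := (Fintype.mem_piFinset.1 ho) k
      simp only [Finset.mem_insert, Finset.mem_singleton] at this
      rw [if_pos this]
    · rw [add_zero]
      refine le_trans (ex_mono _ (g := fun _ => 1) fun b hb => ?_) (ex_const _ _).le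
      split_ifs
      · exact cc_le_one
      · exact le_rfl
  have hval : ex (PMF.uniformOfFintype (Fin d → Fin n))
        (fun o => if o ∈ A then ENNReal.ofReal (1 / 2) else 0) =
        ENNReal.ofReal ((2 : ℝ) ^ d / 2 / (n : ℝ) ^ d) := by
    unfold ex
    rw [tsum_fintype]
    simp only [PMF.uniformOfFintype_apply, mul_ite, mul_zero, Finset.sum_ite_mem,
      Finset.univ_inter, Finset.sum_const, hcard, nsmul_eq_mul, Fintype.card_pi, Fintype.card_fin,
      Finset.prod_const, Finset.card_univ]
    have hn' : (0 : ℝ) < (n : ℝ) ^ d := by positivity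
    have e1 : (((n ^ d : ℕ) : ENNReal))⁻¹ = ENNReal.ofReal (((n : ℝ) ^ d)⁻¹) := by
      rw [ENNReal.ofReal_inv_of_pos hn', ← Nat.cast_pow, ENNReal.ofReal_natCast]
    have e2 : (((2 ^ d : ℕ) : ENNReal)) = ENNReal.ofReal ((2 : ℝ) ^ d) := by
      rw [← ENNReal.ofReal_natCast]; push_cast; rfl
    rw [e1, e2, ← ENNReal.ofReal_mul (by positivity), ← ENNReal.ofReal_mul (by positivity)]
    congr 1
    field_simp
  rw [hval] at key
  have h1 := ENNReal.le_sub_of_add_le_right ENNReal.ofReal_ne_top key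
  refine h1.trans ?_
  rw [← ENNReal.ofReal_one, ← ENNReal.ofReal_sub _ (by positivity)]
  apply ENNReal.ofReal_le_ofReal
  have h4 : (4 : ℝ) ≤ 2 ^ d := by
    calc (4 : ℝ) = 2 ^ 2 := by norm_num
      _ ≤ 2 ^ d := pow_le_pow_right₀ (by norm_num) hd
  have h5 : 2 / (n : ℝ) ^ d ≤ (2 : ℝ) ^ d / 2 / (n : ℝ) ^ d := by
    gcongr
    linarith
  have h6 := Real.add_one_le_exp (-(2 / (n : ℝ) ^ d))
  linarith

/-- Number of balls in bins `i`, `j` during the `R` steps following time `s`. -/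
def cnt {n : ℕ} (i j : Fin n) (s R : ℕ) (h : List (Fin n × Equiv.Perm (Fin n))) : ℕ :=
  (((h.map Prod.fst).drop s).take R).count i + (((h.map Prod.fst).drop s).take R).count j

lemma cnt_mid {n : ℕ} (i j : Fin n) (hij : i ≠ j) (s R : ℕ)
    (h : List (Fin n × Equiv.Perm (Fin n))) (h1 : s ≤ h.length) (h2 : h.length < s + R)
    (b : Fin n) (σ : Equiv.Perm (Fin n)) :
    cnt i j s R (h ++ [(b, σ)]) = cnt i j s R h + if b = i ∨ b = j then 1 else 0 := by
  unfold cnt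
  rw [List.map_append, List.drop_append_of_le_length (by simpa using h1),
    List.take_of_length_le (by simp; omega), List.take_of_length_le (by simp; omega)]
  simp only [List.map_cons, List.map_nil, List.count_append, List.count_singleton, beq_iff_eq]
  by_cases hi : b = i
  · subst hi; simp [hij]; omega
  · by_cases hj : b = j
    · subst hj; simp [hi]; omega
    · simp [hi, hj]

lemma cnt_late {n : ℕ} (i j : Fin n) (s R : ℕ)
    (h : List (Fin n × Equiv.Perm (Fin n))) (h2 : s + R ≤ h.length)
    (b : Fin n) (σ : Equiv.Perm (Fin n)) :
    cnt i j s R (h ++ [(b, σ)]) = cnt i j s R h := by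
  unfold cnt
  rw [List.map_append, List.drop_append_of_le_length (by simp; omega),
    List.take_append_of_le_length (by simp; omega)]

lemma moment (n d : ℕ) (hn : 0 < n) (hd : 2 ≤ d) (hd0 : 0 < d) (init : Fin n → ℕ)
    (i j : Fin n) (hij : i ≠ j) (s R m : ℕ) :
    ex (proc n d hn hd0 init m) (fun h => cc ^ cnt i j s R h) ≤
      ENNReal.ofReal (Real.exp (-(2 / (n : ℝ) ^ d))) ^ min (m - s) R := by
  induction m with
  | zero =>
    simp only [proc, ex_pure]
    simp [cnt]
  | succ m ih =>
    by_cases hs : m < s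
    · have : m + 1 - s = 0 := by omega
      rw [this]
      simp only [Nat.zero_min, pow_zero]
      exact le_trans (ex_mono _ (g := fun _ => 1) fun h _ => pow_le_one' cc_le_one _)
        (ex_const _ _).le
    · rw [ex_proc_succ]
      by_cases hR : m < s + R
      · have : min (m + 1 - s) R = min (m - s) R + 1 := by omega
        rw [this, pow_succ]
        refine le_trans ?_ (mul_le_mul_left ih _)
        rw [← ex_mul]
        refine ex_mono _ fun h hh => ?_
        have hl := proc_length n d hn hd0 init m h hh
        simp only [cnt_mid i j hij s R h (by omega) (by omega), ex_const]
        refine le_trans ?_ (mul_le_mul_right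
          (step_bound n d hn hd hd0 (loadsOf n init (h.map Prod.fst)) i j hij) _)
        rw [mul_comm, ← ex_mul]
        refine ex_mono _ fun b _ => ?_
        rw [pow_add, mul_comm]
        split_ifs <;> simp
      · have : min (m + 1 - s) R = min (m - s) R := by omega
        rw [this]
        refine le_trans ?_ ih
        refine ex_mono _ fun h hh => ?_
        have hl := proc_length n d hn hd0 init m h hh
        simp only [cnt_late i j s R h (by omega), ex_const]
        exact le_rfl

lemma tail (n d : ℕ) (hn : 0 < n) (hd : 2 ≤ d) (hd0 : 0 < d) (init : Fin n → ℕ)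
    (i j : Fin n) (hij : i ≠ j) (s m : ℕ) (hm : s + n ^ (3 * d + 10) ≤ m) :
    (proc n d hn hd0 init m).toOuterMeasure
      {h | cnt i j s (n ^ (3 * d + 10)) h < n ^ (2 * d + 10)} ≤
      ENNReal.ofReal (Real.exp (-(n : ℝ) ^ (d + 10))) := by
  have h1 := moment n d hn hd hd0 init i j hij s (n ^ (3 * d + 10)) m
  rw [min_eq_right (by omega)] at h1
  set r := n ^ (2 * d + 10) with hr
  have h2 : (proc n d hn hd0 init m).toOuterMeasure
      {h | cnt i j s (n ^ (3 * d + 10)) h < r} ≤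
      ex (proc n d hn hd0 init m) (fun h => cc ^ cnt i j s (n ^ (3 * d + 10)) h) *
        ENNReal.ofReal (Real.exp r) := by
    rw [← ex_mul, PMF.toOuterMeasure_apply]
    unfold ex
    refine ENNReal.tsum_le_tsum fun h => ?_
    by_cases hh : h ∈ {h | cnt i j s (n ^ (3 * d + 10)) h < r}
    · rw [Set.indicator_of_mem hh]
      have hle : (1 : ENNReal) ≤
          cc ^ cnt i j s (n ^ (3 * d + 10)) h * ENNReal.ofReal (Real.exp r) := by
        unfold cc
        rw [← ENNReal.ofReal_pow (Real.exp_pos _).le, ← ENNReal.ofReal_mul (by positivity),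
          ← Real.exp_nat_mul, ← Real.exp_add, ← ENNReal.ofReal_one]
        apply ENNReal.ofReal_le_ofReal
        apply Real.one_le_exp
        have : ((cnt i j s (n ^ (3 * d + 10)) h : ℕ) : ℝ) ≤ r := by exact_mod_cast le_of_lt hh
        linarith
      calc _ = proc n d hn hd0 init m h * 1 := (mul_one _).symm
        _ ≤ _ := by gcongr
    · rw [Set.indicator_of_notMem hh]
      exact zero_le
  refine h2.trans ((mul_le_mul_left h1 _).trans ?_)
  rw [← ENNReal.ofReal_pow (Real.exp_pos _).le, ← ENNReal.ofReal_mul (by positivity),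
    ← Real.exp_nat_mul, ← Real.exp_add]
  apply ENNReal.ofReal_le_ofReal
  apply Real.exp_le_exp.2
  have hn0 : (n : ℝ) ≠ 0 := by positivity
  have e : ((n ^ (3 * d + 10) : ℕ) : ℝ) * -(2 / (n : ℝ) ^ d) = -2 * (n : ℝ) ^ (2 * d + 10) := by
    push_cast
    rw [show 3 * d + 10 = (2 * d + 10) + d by ring, pow_add _ (2 * d + 10) d]
    field_simp
  rw [e, hr]
  push_cast
  have : (n : ℝ) ^ (d + 10) ≤ (n : ℝ) ^ (2 * d + 10) :=
    pow_le_pow_right₀ (by exact_mod_cast hn) (by omega)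
  linarith

end Unfair

open Unfair in
/-- **Initialization phases get enough balls.** For `n ≥ 2`, `d ≥ 2`, set
`R = n^(3d+10)` and `r = n^(2d+10)`.  Run UNFAIR from empty bins for
`C(n,2)·R` steps, partitioned into `C(n,2)` consecutive phases of length `R`, one phase
`φ_{i,j}` (indexed by `ph i j`) for each unordered pair of distinct bins.  Let `X` be
the event that each pair `{i,j}` receives at least `r` balls combined during its phase.
Then `Pr(X) ≥ 1 − O(n²·e^(−n^(d+10)))`. -/
theorem unfair_phase_balls (d : ℕ) (hd2 : 2 ≤ d) :
    ∃ C : ℝ, 0 < C ∧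
      ∀ n : ℕ, ∀ hn2 : 2 ≤ n,
        ∀ ph : Fin n → Fin n → ℕ,
          (∀ i j, ph i j = ph j i) →
          (∀ i j, i ≠ j → ph i j < n.choose 2) →
          (∀ i j k l, i ≠ j → k ≠ l → ph i j = ph k l →
            (i = k ∧ j = l) ∨ (i = l ∧ j = k)) →
          1 - C * (n : ℝ) ^ 2 * Real.exp (-(n : ℝ) ^ (d + 10)) ≤
            prob (proc n d (by omega) (by omega) 0 (n.choose 2 * n ^ (3 * d + 10)))
              {h | ∀ i j : Fin n, i ≠ j →
                n ^ (2 * d + 10) ≤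
                  (((h.map Prod.fst).drop (ph i j * n ^ (3 * d + 10))).take
                      (n ^ (3 * d + 10))).count i +
                  (((h.map Prod.fst).drop (ph i j * n ^ (3 * d + 10))).take
                      (n ^ (3 * d + 10))).count j} := by
  refine ⟨1, one_pos, ?_⟩
  intro n hn2 ph _ hph _
  set M := n.choose 2 * n ^ (3 * d + 10) with hM
  set p := proc n d (by omega) (by omega) 0 M with hp
  set S : Set (List (Fin n × Equiv.Perm (Fin n))) := {h | ∀ i j : Fin n, i ≠ j →
    n ^ (2 * d + 10) ≤ cnt i j (ph i j * n ^ (3 * d + 10)) (n ^ (3 * d + 10)) h} with hS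
  change _ ≤ prob p S
  set q : ENNReal := ENNReal.ofReal (Real.exp (-(n : ℝ) ^ (d + 10))) with hq
  have hbad : p.toOuterMeasure Sᶜ ≤ (n : ENNReal) * (n * q) := by
    have hsub : Sᶜ ⊆ ⋃ i : Fin n, ⋃ j : Fin n, {h | i ≠ j ∧
        cnt i j (ph i j * n ^ (3 * d + 10)) (n ^ (3 * d + 10)) h < n ^ (2 * d + 10)} := by
      intro h hh
      simp only [hS, Set.mem_compl_iff, Set.mem_setOf_eq, not_forall, not_le] at hh
      obtain ⟨i, j, hij, hlt⟩ := hh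
      simp only [Set.mem_iUnion, Set.mem_setOf_eq]
      exact ⟨i, j, hij, hlt⟩
    refine (MeasureTheory.measure_mono hsub).trans ?_
    refine (MeasureTheory.measure_iUnion_le _).trans ?_
    rw [tsum_fintype]
    refine (Finset.sum_le_card_nsmul _ _ (n * q) fun i _ => ?_).trans (by simp)
    refine (MeasureTheory.measure_iUnion_le _).trans ?_
    rw [tsum_fintype]
    refine (Finset.sum_le_card_nsmul _ _ q fun j _ => ?_).trans (by simp)
    by_cases hij : i = j
    · simp [hij]
    · refine le_trans (MeasureTheory.measure_mono fun h hh => hh.2)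
        (tail n d (by omega) hd2 (by omega) 0 i j hij _ M ?_)
      have := hph i j hij
      calc _ = (ph i j + 1) * n ^ (3 * d + 10) := by ring
        _ ≤ _ := Nat.mul_le_mul_right _ this
  have hone : (1 : ENNReal) ≤ p.toOuterMeasure S + p.toOuterMeasure Sᶜ := by
    have h1 : p.toOuterMeasure Set.univ = 1 := by
      rw [PMF.toOuterMeasure_apply_eq_one_iff]
      exact Set.subset_univ _
    rw [← h1, ← Set.union_compl_self S]
    exact MeasureTheory.measure_union_le _ _
  have hle1 : p.toOuterMeasure S ≠ ⊤ := by
    have h1 : p.toOuterMeasure Set.univ = 1 := by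
      rw [PMF.toOuterMeasure_apply_eq_one_iff]
      exact Set.subset_univ _
    exact ne_top_of_le_ne_top (by rw [h1]; exact ENNReal.one_ne_top)
      (MeasureTheory.measure_mono (Set.subset_univ S))
  have hfin := hone.trans (add_le_add_right hbad _)
  have hq' : (n : ENNReal) * (n * q) ≠ ⊤ := by
    simp [hq, ENNReal.mul_eq_top]
  have hreal := ENNReal.toReal_mono (ENNReal.add_ne_top.2 ⟨hle1, hq'⟩) hfin
  rw [ENNReal.toReal_add hle1 hq', ENNReal.toReal_one, ENNReal.toReal_mul, ENNReal.toReal_mul,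
    ENNReal.toReal_natCast, hq, ENNReal.toReal_ofReal (Real.exp_pos _).le] at hreal
  unfold prob
  nlinarith [hreal]
end
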